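/- arXiv:1203.0522 — 5 statements merged into one kernel-verified Lean document; each statement's English description precedes it below -/
import Mathlib

section
/- Let N ≥ 1, let h > 0 and m₁,…,m_N > 0 be real constants, let V : ℝ^N → ℝ, and let S₁, S₂ : ℝ × ℝ^N → ℝ be twice continuously differentiable solutions of the equation ∂S/∂t = V(x) + ∑_{i=1}^N (1/(2mᵢ))·(∂S/∂xᵢ)² + h·∑_{i=1}^N (1/(2mᵢ))·∂²S/∂xᵢ². Then for any real constants λ₁, λ₂, the function S = h·log( e^{(λ₁+S₁)/h} + e^{(λ₂+S₂)/h} ) is also a solution of the same equation. -/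
/-! The Hopf–Cole substitution `u = exp (S / h)` linearizes the equation. Concretely, along any line
put `p = A / (A + B)` and `q = B / (A + B)`, where `A` and `B` are the exponentials of
`(λ₁ + S₁) / h` and `(λ₂ + S₂) / h`. The combined function `S` satisfies `S' = p S₁' + q S₂'` and
`S'² + h S'' = p (S₁'² + h S₁'') + q (S₂'² + h S₂'')`
(`hasDerivAt_logSum`, `sq_deriv_add_iteratedDeriv_logSum`). As `p + q = 1`, the convex combination
with weights `p`, `q` of the equations for `S₁` and `S₂` is the equation for `S`. -/

open Real

/-- `S` solves the viscous Hamilton–Jacobi equation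
`∂S/∂t = V + ∑ (1/2mᵢ) (∂S/∂xᵢ)² + h ∑ (1/2mᵢ) ∂²S/∂xᵢ²`. -/
def SolvesViscousHJ (N : ℕ) (h : ℝ) (m : Fin N → ℝ)
    (V : (Fin N → ℝ) → ℝ) (S : ℝ → (Fin N → ℝ) → ℝ) : Prop :=
  ∀ (t : ℝ) (x : Fin N → ℝ),
    deriv (fun τ => S τ x) t =
      V x
        + (∑ i, (1 / (2 * m i)) *
            (deriv (fun s => S t (Function.update x i s)) (x i)) ^ 2)
        + h * ∑ i, (1 / (2 * m i)) *
            iteratedDeriv 2 (fun s => S t (Function.update x i s)) (x i)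

/-- The first derivative of `h log (e^{(a+f)/h} + e^{(b+g)/h})` is the average of `f'` and `g'`
weighted by the two exponentials. -/
lemma hasDerivAt_logSum {h a b f' g' s : ℝ} (hh : h ≠ 0) {f g : ℝ → ℝ}
    (hf : HasDerivAt f f' s) (hg : HasDerivAt g g' s) :
    HasDerivAt (fun s => h * Real.log (Real.exp ((a + f s) / h) + Real.exp ((b + g s) / h)))
      ((Real.exp ((a + f s) / h) * f' + Real.exp ((b + g s) / h) * g') /
        (Real.exp ((a + f s) / h) + Real.exp ((b + g s) / h))) s := by
  have hA := ((hf.const_add a).div_const h).exp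
  have hB := ((hg.const_add b).div_const h).exp
  have hne : Real.exp ((a + f s) / h) + Real.exp ((b + g s) / h) ≠ 0 := by positivity
  refine (((hA.add hB).log hne).const_mul h).congr_deriv ?_
  simp only [Pi.add_apply]
  field_simp

/-- The quantity `F'² + h F''`, which is `h² e^{-F/h} (e^{F/h})''`, is averaged with the same
weights as the first derivative. -/
lemma sq_deriv_add_iteratedDeriv_logSum {h a b : ℝ} (hh : h ≠ 0) {f g : ℝ → ℝ}
    (hf : ContDiff ℝ 2 f) (hg : ContDiff ℝ 2 g) (s : ℝ) :
    (deriv (fun s => h * Real.log (Real.exp ((a + f s) / h) + Real.exp ((b + g s) / h))) s) ^ 2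
      + h * iteratedDeriv 2
        (fun s => h * Real.log (Real.exp ((a + f s) / h) + Real.exp ((b + g s) / h))) s =
    (Real.exp ((a + f s) / h) * ((deriv f s) ^ 2 + h * iteratedDeriv 2 f s)
      + Real.exp ((b + g s) / h) * ((deriv g s) ^ 2 + h * iteratedDeriv 2 g s)) /
        (Real.exp ((a + f s) / h) + Real.exp ((b + g s) / h)) := by
  have hf1 (s : ℝ) : HasDerivAt f (deriv f s) s :=
    (hf.differentiable (by norm_num) s).hasDerivAt
  have hg1 (s : ℝ) : HasDerivAt g (deriv g s) s :=
    (hg.differentiable (by norm_num) s).hasDerivAt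
  have hf2 : HasDerivAt (deriv f) (deriv (deriv f) s) s :=
    (hf.differentiable_deriv_two s).hasDerivAt
  have hg2 : HasDerivAt (deriv g) (deriv (deriv g) s) s :=
    (hg.differentiable_deriv_two s).hasDerivAt
  have hF := funext fun s => (hasDerivAt_logSum (a := a) (b := b) hh (hf1 s) (hg1 s)).deriv
  have hA := (((hf1 s).const_add a).div_const h).exp
  have hB := (((hg1 s).const_add b).div_const h).exp
  have hne : Real.exp ((a + f s) / h) + Real.exp ((b + g s) / h) ≠ 0 := by positivity
  have hF2 := (((hA.mul hf2).add (hB.mul hg2)).div (hA.add hB) hne).deriv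
  simp only [iteratedDeriv_succ, iteratedDeriv_zero]
  rw [hF]
  erw [hF2]
  simp only [Pi.add_apply, Pi.mul_apply]
  generalize Real.exp ((a + f s) / h) = A at *
  generalize Real.exp ((b + g s) / h) = B at *
  field_simp
  ring

/-- The idempotent superposition principle: if `S₁` and `S₂` solve the viscous
Hamilton–Jacobi equation, then so does
`S = h·log(e^{(λ₁+S₁)/h} + e^{(λ₂+S₂)/h}) = λ₁ ⊙ S₁ ⊕_h λ₂ ⊙ S₂`. -/
theorem viscous_hamilton_jacobi_superposition
    (N : ℕ) (hN : 1 ≤ N) (h : ℝ) (hh : 0 < h)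
    (m : Fin N → ℝ) (hm : ∀ i, 0 < m i)
    (V : (Fin N → ℝ) → ℝ) (S₁ S₂ : ℝ → (Fin N → ℝ) → ℝ)
    (hS₁ : ContDiff ℝ 2 (fun p : ℝ × (Fin N → ℝ) => S₁ p.1 p.2))
    (hS₂ : ContDiff ℝ 2 (fun p : ℝ × (Fin N → ℝ) => S₂ p.1 p.2))
    (hsol₁ : SolvesViscousHJ N h m V S₁) (hsol₂ : SolvesViscousHJ N h m V S₂)
    (lam₁ lam₂ : ℝ) :
    SolvesViscousHJ N h m V
      (fun t x => h * Real.log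
        (Real.exp ((lam₁ + S₁ t x) / h) + Real.exp ((lam₂ + S₂ t x) / h))) := by
  have hh' : h ≠ 0 := hh.ne'
  intro t x
  have hT {S : ℝ → (Fin N → ℝ) → ℝ}
      (hS : ContDiff ℝ 2 (fun p : ℝ × (Fin N → ℝ) => S p.1 p.2)) :
      HasDerivAt (fun τ => S τ x) (deriv (fun τ => S τ x) t) t :=
    ((hS.comp (contDiff_id.prodMk contDiff_const)).differentiable (by norm_num) t).hasDerivAt
  have hX {S : ℝ → (Fin N → ℝ) → ℝ}
      (hS : ContDiff ℝ 2 (fun p : ℝ × (Fin N → ℝ) => S p.1 p.2)) (i : Fin N) :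
      ContDiff ℝ 2 (fun s => S t (Function.update x i s)) :=
    hS.comp (contDiff_const.prodMk (contDiff_update 2 x i))
  -- The equation with its two sums merged, so that `F'² + h F''` appears in each direction.
  have merge (c D E : Fin N → ℝ) : V x + (∑ i, c i * (D i) ^ 2) + h * ∑ i, c i * E i
      = V x + ∑ i, c i * ((D i) ^ 2 + h * E i) := by
    rw [Finset.mul_sum, add_assoc, ← Finset.sum_add_distrib]
    congr 1
    exact Finset.sum_congr rfl fun i _ => by ring
  have e₁ := hsol₁ t x
  have e₂ := hsol₂ t x
  rw [merge] at e₁ e₂ ⊢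
  simp only [sq_deriv_add_iteratedDeriv_logSum hh' (hX hS₁ _) (hX hS₂ _),
    Function.update_eq_self]
  rw [(hasDerivAt_logSum hh' (hT hS₁) (hT hS₂)).deriv, e₁, e₂]
  have hne : Real.exp ((lam₁ + S₁ t x) / h) + Real.exp ((lam₂ + S₂ t x) / h) ≠ 0 := by positivity
  generalize Real.exp ((lam₁ + S₁ t x) / h) = A at *
  generalize Real.exp ((lam₂ + S₂ t x) / h) = B at *
  rw [div_eq_iff hne, add_mul, Finset.sum_mul, mul_add, mul_add, Finset.mul_sum, Finset.mul_sum,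
    add_add_add_comm, ← Finset.sum_add_distrib]
  congr 1
  · ring
  · exact Finset.sum_congr rfl fun i _ => by field_simp
end

section
/- Let p₁, p₂ : ℝⁿ → ℝ be continuous sublinear functions. Then the subdifferential of their sum is the Minkowski sum of their subdifferentials: ∂(p₁ + p₂) = { v₁ + v₂ : v₁ ∈ ∂p₁, v₂ ∈ ∂p₂ }. -/
/-!
One inclusion is immediate: adding the bounds for `v₁ ∈ ∂p₁` and `v₂ ∈ ∂p₂` gives
`v₁ + v₂ ∈ ∂(p₁ + p₂)`. For the other one, the function `(x, y) ↦ p₁ x + p₂ y` is sublinear on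
`ℝⁿ × ℝⁿ`, and `v ∈ ∂(p₁ + p₂)` says exactly that on the diagonal it dominates the linear
functional `(x, x) ↦ ⟨v, x⟩`. The Hahn–Banach theorem (`exists_extension_of_le_sublinear`) extends
this functional to all of `ℝⁿ × ℝⁿ`, still dominated; its restrictions to the two factors
are the required elements of `∂p₁` and `∂p₂`, and their sum is `v` because the extension agrees with
the original functional on the diagonal.
-/

open Pointwise

/-- Splitting of a linear functional dominated by a sum of two sublinear functions. -/
theorem exists_add_eq_of_le_add_sublinear {E : Type*} [AddCommGroup E] [Module ℝ E]
    (p₁ p₂ : E → ℝ)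
    (hsubadd₁ : ∀ x y : E, p₁ (x + y) ≤ p₁ x + p₁ y)
    (hsubadd₂ : ∀ x y : E, p₂ (x + y) ≤ p₂ x + p₂ y)
    (hhom₁ : ∀ c : ℝ, 0 ≤ c → ∀ x : E, p₁ (c • x) = c * p₁ x)
    (hhom₂ : ∀ c : ℝ, 0 ≤ c → ∀ x : E, p₂ (c • x) = c * p₂ x)
    (f : E →ₗ[ℝ] ℝ) (hf : ∀ x, f x ≤ p₁ x + p₂ x) :
    ∃ f₁ f₂ : E →ₗ[ℝ] ℝ, (∀ x, f₁ x ≤ p₁ x) ∧ (∀ x, f₂ x ≤ p₂ x) ∧ f₁ + f₂ = f := by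
  let Δ : Submodule ℝ (E × E) := LinearMap.eqLocus (LinearMap.fst ℝ E E) (LinearMap.snd ℝ E E)
  obtain ⟨g, hgf, hg⟩ := exists_extension_of_le_sublinear
    (⟨Δ, f ∘ₗ LinearMap.fst ℝ E E ∘ₗ Δ.subtype⟩ : (E × E) →ₗ.[ℝ] ℝ)
    (fun z => p₁ z.1 + p₂ z.2)
    (fun c hc z => by
      simp only [Prod.smul_fst, Prod.smul_snd, hhom₁ c hc.le, hhom₂ c hc.le, mul_add])
    (fun z w => by
      have h₁ := hsubadd₁ z.1 w.1
      have h₂ := hsubadd₂ z.2 w.2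
      simp only [Prod.fst_add, Prod.snd_add]
      linarith)
    (by
      rintro ⟨⟨x, y⟩, hxy⟩
      obtain rfl : x = y := hxy
      exact hf x)
  have h0₁ : p₁ 0 = 0 := by simpa using hhom₁ 0 le_rfl 0
  have h0₂ : p₂ 0 = 0 := by simpa using hhom₂ 0 le_rfl 0
  refine ⟨g ∘ₗ LinearMap.inl ℝ E E, g ∘ₗ LinearMap.inr ℝ E E, fun x => ?_, fun x => ?_, ?_⟩
  · simpa [h0₂] using hg (x, 0)
  · simpa [h0₁] using hg (0, x)
  · ext x
    have hx : g (x, x) = f x := hgf ⟨(x, x), rfl⟩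
    simp [← hx, ← map_add]

/-- For continuous sublinear `p₁, p₂ : ℝⁿ → ℝ`, the subdifferential at the
origin of `p₁ + p₂` is the Minkowski sum of the subdifferentials. -/
theorem subdifferential_add_eq_minkowski_sum
    (n : ℕ) (p₁ p₂ : (Fin n → ℝ) → ℝ)
    (hcont₁ : Continuous p₁) (hcont₂ : Continuous p₂)
    (hsubadd₁ : ∀ x y : Fin n → ℝ, p₁ (x + y) ≤ p₁ x + p₁ y)
    (hsubadd₂ : ∀ x y : Fin n → ℝ, p₂ (x + y) ≤ p₂ x + p₂ y)
    (hhom₁ : ∀ (c : ℝ), 0 ≤ c → ∀ x : Fin n → ℝ, p₁ (c • x) = c * p₁ x)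
    (hhom₂ : ∀ (c : ℝ), 0 ≤ c → ∀ x : Fin n → ℝ, p₂ (c • x) = c * p₂ x) :
    {v : Fin n → ℝ | ∀ x, (∑ i, v i * x i) ≤ p₁ x + p₂ x} =
      {v : Fin n → ℝ | ∀ x, (∑ i, v i * x i) ≤ p₁ x} +
        {v : Fin n → ℝ | ∀ x, (∑ i, v i * x i) ≤ p₂ x} := by
  ext v
  simp only [Set.mem_add, Set.mem_ofPred_eq]
  constructor
  · intro hv
    obtain ⟨f₁, f₂, h₁, h₂, hadd⟩ := exists_add_eq_of_le_add_sublinear p₁ p₂ hsubadd₁ hsubadd₂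
      hhom₁ hhom₂ (Fintype.linearCombination ℝ v) fun x => by
        simpa [Fintype.linearCombination_apply, mul_comm] using hv x
    have hrep (f : (Fin n → ℝ) →ₗ[ℝ] ℝ) (x : Fin n → ℝ) :
        ∑ i, f (Pi.single i 1) * x i = f x := by
      rw [LinearMap.pi_apply_eq_sum_univ f x]
      refine Finset.sum_congr rfl fun i _ => ?_
      rw [smul_eq_mul, mul_comm]
      congr 3
      ext j
      simp [Pi.single_apply, eq_comm]
    refine ⟨fun i => f₁ (Pi.single i 1), fun x => (hrep f₁ x).trans_le (h₁ x),
      fun i => f₂ (Pi.single i 1), fun x => (hrep f₂ x).trans_le (h₂ x), ?_⟩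
    ext i
    simpa using LinearMap.congr_fun hadd (Pi.single i 1)
  · rintro ⟨v₁, h₁, v₂, h₂, rfl⟩ x
    simp only [Pi.add_apply, add_mul, Finset.sum_add_distrib]
    exact add_le_add (h₁ x) (h₂ x)
end

section
/- Let p₁, p₂ : ℝⁿ → ℝ be continuous sublinear functions. Then the subdifferential of their pointwise maximum equals the convex hull of the union of their subdifferentials: ∂( x ↦ max{p₁(x), p₂(x)} ) = conv( ∂p₁ ∪ ∂p₂ ). -/
/-!
The set `{v | ∀ x, ⟨v, x⟩ ≤ p x}` of a sublinear `p` on `ℝⁿ` is convex and compact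
(`convex_subdiff`, `isCompact_subdiff`), and by Hahn-Banach `p` is its support function: at every
point `x` some `v` in it satisfies `⟨v, x⟩ = p x` (`exists_mem_subdiff_eq`). Hence the right-hand
side of the theorem, being the convex join of two nonempty compact convex sets, is compact
(`isCompact_convexJoin`). If some `v` in the left-hand side were outside it, a vector `x` would
strictly separate the two: `⟨u, x⟩ < c < ⟨v, x⟩` for all `u` in the hull. Choosing `u` with
`⟨u, x⟩ = pᵢ x` for `i = 1, 2` gives `max (p₁ x) (p₂ x) < c < ⟨v, x⟩`, a contradiction. For the
reverse inclusion, the left-hand side is convex and contains both subdifferentials.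
-/

/-- The subdifferential of `p` at the origin, as a set of vectors via the dot product. -/
def subdiff {n : ℕ} (p : (Fin n → ℝ) → ℝ) : Set (Fin n → ℝ) :=
  {v | ∀ x, (∑ i, v i * x i) ≤ p x}

lemma convex_subdiff {n : ℕ} (p : (Fin n → ℝ) → ℝ) : Convex ℝ (subdiff p) := by
  intro u hu v hv a b ha hb hab x
  have h : ∑ i, (a • u + b • v) i * x i = a * ∑ i, u i * x i + b * ∑ i, v i * x i := by
    simp only [Finset.mul_sum, ← Finset.sum_add_distrib, Pi.add_apply, Pi.smul_apply, smul_eq_mul]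
    exact Finset.sum_congr rfl fun i _ => by ring
  rw [h]
  calc a * ∑ i, u i * x i + b * ∑ i, v i * x i ≤ a * p x + b * p x := by
        gcongr
        · exact hu x
        · exact hv x
    _ = p x := by rw [← add_mul, hab, one_mul]

/-- The subdifferential of any real-valued `p` is compact: evaluating at `± eᵢ` confines it to a
box. -/
lemma isCompact_subdiff {n : ℕ} (p : (Fin n → ℝ) → ℝ) : IsCompact (subdiff p) := by
  refine (isCompact_Icc (a := fun i => -p (Pi.single i (-1)))
    (b := fun i => p (Pi.single i 1))).of_isClosed_subset ?_ ?_
  · simp only [subdiff, Set.ofPred_forall]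
    exact isClosed_iInter fun x => isClosed_le (by fun_prop) continuous_const
  · intro v hv
    refine ⟨fun i => ?_, fun i => ?_⟩
    · have := hv (Pi.single i (-1))
      simp [Pi.single_apply] at this
      linarith
    · simpa [Pi.single_apply] using hv (Pi.single i 1)

lemma linearMap_apply_eq_sum {n : ℕ} (g : (Fin n → ℝ) →ₗ[ℝ] ℝ) (x : Fin n → ℝ) :
    g x = ∑ i, g (Pi.single i 1) * x i := by
  rw [LinearMap.pi_apply_eq_sum_univ g x]
  refine Finset.sum_congr rfl fun i _ => ?_
  rw [smul_eq_mul, mul_comm]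
  congr 2
  ext j
  simp [Pi.single_apply, eq_comm]

/-- A sublinear function attains the supremum of the linear functionals below it, at each point:
Hahn-Banach extends `c • x ↦ c * p x` from the line through `x`. -/
lemma exists_mem_subdiff_eq {n : ℕ} {p : (Fin n → ℝ) → ℝ}
    (hsubadd : ∀ x y, p (x + y) ≤ p x + p y)
    (hhom : ∀ c : ℝ, 0 ≤ c → ∀ x, p (c • x) = c * p x) (x : Fin n → ℝ) :
    ∃ v ∈ subdiff p, ∑ i, v i * x i = p x := by
  have h0 : p 0 = 0 := by simpa using hhom 0 le_rfl 0
  have H : ∀ c : ℝ, c • x = 0 → c • p x = 0 := by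
    intro c hc
    rcases smul_eq_zero.mp hc with rfl | rfl
    · simp
    · simp [h0]
  obtain ⟨g, hg, hgp⟩ := exists_extension_of_le_sublinear
    (LinearPMap.mkSpanSingleton' (σ := RingHom.id ℝ) x (p x) H) p (fun c hc => hhom c hc.le)
    hsubadd (by
      rintro ⟨y, hy⟩
      obtain ⟨c, rfl⟩ := Submodule.mem_span_singleton.mp hy
      rw [LinearPMap.mkSpanSingleton'_apply]
      simp only [RingHom.id_apply, smul_eq_mul]
      rcases le_total 0 c with hc | hc
      · exact (hhom c hc x).ge
      -- For `c ≤ 0`, subadditivity gives `0 = p 0 ≤ p (c • x) + p (-c • x)`.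
      · have h1 := hsubadd (c • x) ((-c) • x)
        rw [hhom (-c) (by linarith), ← add_smul, add_neg_cancel, zero_smul, h0] at h1
        linarith)
  refine ⟨fun i => g (Pi.single i 1), fun y => ?_, ?_⟩
  · rw [← linearMap_apply_eq_sum]
    exact hgp y
  · rw [← linearMap_apply_eq_sum]
    exact (hg ⟨x, Submodule.mem_span_singleton_self x⟩).trans
      (LinearPMap.mkSpanSingleton'_apply_self x (p x) H _)

/-- The convex join of two compact sets is the image of `s × t × [0, 1]` under
`(a, b, θ) ↦ a + θ • (b - a)`. -/
lemma isCompact_convexJoin {n : ℕ} {s t : Set (Fin n → ℝ)} (hs : IsCompact s)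
    (ht : IsCompact t) : IsCompact (convexJoin ℝ s t) := by
  have himage : convexJoin ℝ s t =
      (fun q : (Fin n → ℝ) × (Fin n → ℝ) × ℝ => q.1 + q.2.2 • (q.2.1 - q.1)) ''
        (s ×ˢ t ×ˢ Set.Icc (0 : ℝ) 1) := by
    ext z
    simp only [mem_convexJoin, segment_eq_image', Set.mem_image, Set.mem_prod, Prod.exists]
    constructor
    · rintro ⟨a, ha, b, hb, θ, hθ, rfl⟩
      exact ⟨a, b, θ, ⟨ha, hb, hθ⟩, rfl⟩
    · rintro ⟨a, b, θ, ⟨ha, hb, hθ⟩, rfl⟩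
      exact ⟨a, ha, b, hb, θ, hθ, rfl⟩
  rw [himage]
  exact (hs.prod (ht.prod isCompact_Icc)).image (by fun_prop)

/-- For continuous sublinear `p₁, p₂ : ℝⁿ → ℝ`, the subdifferential at the
origin of `x ↦ max{p₁(x), p₂(x)}` is the convex hull of the union of the
subdifferentials. -/
theorem subdifferential_max_eq_convexHull_union
    (n : ℕ) (p₁ p₂ : (Fin n → ℝ) → ℝ)
    (hcont₁ : Continuous p₁) (hcont₂ : Continuous p₂)
    (hsubadd₁ : ∀ x y : Fin n → ℝ, p₁ (x + y) ≤ p₁ x + p₁ y)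
    (hsubadd₂ : ∀ x y : Fin n → ℝ, p₂ (x + y) ≤ p₂ x + p₂ y)
    (hhom₁ : ∀ (c : ℝ), 0 ≤ c → ∀ x : Fin n → ℝ, p₁ (c • x) = c * p₁ x)
    (hhom₂ : ∀ (c : ℝ), 0 ≤ c → ∀ x : Fin n → ℝ, p₂ (c • x) = c * p₂ x) :
    {v : Fin n → ℝ | ∀ x, (∑ i, v i * x i) ≤ max (p₁ x) (p₂ x)} =
      convexHull ℝ
        ({v : Fin n → ℝ | ∀ x, (∑ i, v i * x i) ≤ p₁ x} ∪
          {v : Fin n → ℝ | ∀ x, (∑ i, v i * x i) ≤ p₂ x}) := by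
  change subdiff (fun x => max (p₁ x) (p₂ x)) = convexHull ℝ (subdiff p₁ ∪ subdiff p₂)
  have hne₁ : (subdiff p₁).Nonempty := (exists_mem_subdiff_eq hsubadd₁ hhom₁ 0).imp fun _ h => h.1
  have hne₂ : (subdiff p₂).Nonempty := (exists_mem_subdiff_eq hsubadd₂ hhom₂ 0).imp fun _ h => h.1
  have hclosed : IsClosed (convexHull ℝ (subdiff p₁ ∪ subdiff p₂)) := by
    rw [(convex_subdiff p₁).convexHull_union (convex_subdiff p₂) hne₁ hne₂]
    exact (isCompact_convexJoin (isCompact_subdiff p₁) (isCompact_subdiff p₂)).isClosed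
  apply Set.Subset.antisymm
  · intro v hv
    by_contra hnot
    obtain ⟨f, c, hf, hc⟩ := geometric_hahn_banach_closed_point (convex_convexHull ℝ _)
      hclosed hnot
    -- The separating functional `f` is the dot product with the vector `x`.
    set x : Fin n → ℝ := fun i => f (Pi.single i 1)
    have hfx : ∀ u, f u = ∑ i, u i * x i := fun u =>
      (linearMap_apply_eq_sum f.toLinearMap u).trans
        (Finset.sum_congr rfl fun i _ => mul_comm _ _)
    obtain ⟨u₁, hu₁, he₁⟩ := exists_mem_subdiff_eq hsubadd₁ hhom₁ x
    obtain ⟨u₂, hu₂, he₂⟩ := exists_mem_subdiff_eq hsubadd₂ hhom₂ x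
    have h₁ := hf u₁ (subset_convexHull ℝ _ (Or.inl hu₁))
    have h₂ := hf u₂ (subset_convexHull ℝ _ (Or.inr hu₂))
    rw [hfx, he₁] at h₁
    rw [hfx, he₂] at h₂
    rw [hfx] at hc
    exact absurd (hv x) (not_le.mpr ((max_lt h₁ h₂).trans hc))
  · refine convexHull_min ?_ (convex_subdiff _)
    rintro v (hv | hv) x
    · exact (hv x).trans (le_max_left _ _)
    · exact (hv x).trans (le_max_right _ _)
end

section
/- Let f and g be nonzero polynomials in n variables over ℂ (or over any integral domain). Then the Newton polytope of the product is the Minkowski sum of the Newton polytopes: N(f·g) = N(f) + N(g) = { v ∈ ℝⁿ : v = v₁ + v₂ with v₁ ∈ N(f), v₂ ∈ N(g) }. -/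
/-!
The inclusion `N(fg) ⊆ N(f) + N(g)` holds because `supp (fg) ⊆ supp f + supp g` and convex hulls
commute with Minkowski sums. For the other inclusion, a point of `supp f + supp g` outside the
closed convex set `N(fg)` would be strictly separated from it by a linear functional `L`. But the
maximum of `L` over `supp (fg)` is the sum of its maxima over `supp f` and `supp g`
(`exists_mem_support_mul_weight_eq`): weighting the variables by `L`, the part of `fg` of the
largest conceivable weight is the product of the leading forms of `f` and `g`
(`weightedHomogeneousComponent_mul_of_le`), which is nonzero over a domain.
-/

open Pointwise

/-- The Newton polytope of a polynomial in `n` variables: the convex hull in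
`ℝⁿ` of its set of exponent multi-indices. -/
def newtonPolytope {n : ℕ} {R : Type*} [CommSemiring R]
    (f : MvPolynomial (Fin n) R) : Set (Fin n → ℝ) :=
  convexHull ℝ ((fun (d : Fin n →₀ ℕ) (i : Fin n) => (d i : ℝ)) ''
    (f.support : Set (Fin n →₀ ℕ)))

open MvPolynomial in
/-- If all exponents of `f` have weight at most `p` and those of `g` weight at most `q`, the weight
`p + q` part of `f * g` is the product of the weight `p` part of `f` and the weight `q` part of
`g`. -/
lemma weightedHomogeneousComponent_mul_of_le {σ R : Type*} [CommSemiring R]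
    (w : σ → ℝ) (f g : MvPolynomial σ R) (p q : ℝ)
    (hp : ∀ a ∈ f.support, Finsupp.weight w a ≤ p)
    (hq : ∀ b ∈ g.support, Finsupp.weight w b ≤ q) :
    weightedHomogeneousComponent w (p + q) (f * g) =
      weightedHomogeneousComponent w p f * weightedHomogeneousComponent w q g := by
  classical
  ext d
  rw [coeff_weightedHomogeneousComponent, coeff_mul, coeff_mul]
  simp only [coeff_weightedHomogeneousComponent]
  split_ifs with hd
  · refine Finset.sum_congr rfl fun x hx => ?_
    have hw : Finsupp.weight w x.1 + Finsupp.weight w x.2 = p + q := by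
      rw [← map_add, Finset.HasAntidiagonal.mem_antidiagonal.mp hx, hd]
    by_cases ha : coeff x.1 f = 0
    · simp [ha]
    by_cases hb : coeff x.2 g = 0
    · simp [hb]
    have h1 := hp _ (mem_support_iff.mpr ha)
    have h2 := hq _ (mem_support_iff.mpr hb)
    rw [if_pos (by linarith), if_pos (by linarith)]
  · refine (Finset.sum_eq_zero fun x hx => ?_).symm
    have hw : Finsupp.weight w x.1 + Finsupp.weight w x.2 ≠ p + q := by
      rwa [← map_add, Finset.HasAntidiagonal.mem_antidiagonal.mp hx]
    split_ifs with h1 h2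
    · exact absurd (by rw [h1, h2]) hw
    all_goals simp

open MvPolynomial in
/-- Some exponent of the product has weight at least the sum of the maximal weights of the
factors: the product of the two leading forms does not vanish over a domain. -/
lemma exists_mem_support_mul_weight_eq {σ R : Type*} [CommRing R] [IsDomain R]
    (w : σ → ℝ) (f g : MvPolynomial σ R) (hf : f ≠ 0) (hg : g ≠ 0) :
    ∃ d ∈ (f * g).support, ∀ a ∈ f.support, ∀ b ∈ g.support,
      Finsupp.weight w a + Finsupp.weight w b ≤ Finsupp.weight w d := by
  classical
  obtain ⟨a₀, ha₀, hmaxa⟩ :=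
    f.support.exists_max_image (Finsupp.weight w) (support_nonempty.mpr hf)
  obtain ⟨b₀, hb₀, hmaxb⟩ :=
    g.support.exists_max_image (Finsupp.weight w) (support_nonempty.mpr hg)
  have hf' : weightedHomogeneousComponent w (Finsupp.weight w a₀) f ≠ 0 :=
    ne_zero_iff.mpr ⟨a₀, by
      rw [coeff_weightedHomogeneousComponent, if_pos rfl]; exact mem_support_iff.mp ha₀⟩
  have hg' : weightedHomogeneousComponent w (Finsupp.weight w b₀) g ≠ 0 :=
    ne_zero_iff.mpr ⟨b₀, by
      rw [coeff_weightedHomogeneousComponent, if_pos rfl]; exact mem_support_iff.mp hb₀⟩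
  have hne := mul_ne_zero hf' hg'
  rw [← weightedHomogeneousComponent_mul_of_le w f g _ _ hmaxa hmaxb] at hne
  obtain ⟨d, hd⟩ := ne_zero_iff.mp hne
  rw [coeff_weightedHomogeneousComponent] at hd
  obtain ⟨hwd, hcd⟩ := ite_ne_right_iff.mp hd
  exact ⟨d, mem_support_iff.mpr hcd, fun a ha b hb =>
    hwd ▸ add_le_add (hmaxa a ha) (hmaxb b hb)⟩

/-- A linear functional on `ℝⁿ` restricts on exponents to the weight given by its values on the
standard basis. -/
lemma dual_apply_exponent {n : ℕ} (L : StrongDual ℝ (Fin n → ℝ)) (d : Fin n →₀ ℕ) :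
    L (fun i => (d i : ℝ)) = Finsupp.weight (fun i => L (Pi.single i 1)) d := by
  rw [Finsupp.weight_apply, Finsupp.sum_fintype _ _ (by simp), pi_eq_sum_univ' (fun i => (d i : ℝ)),
    map_sum]
  refine Finset.sum_congr rfl fun i _ => ?_
  rw [map_smul, nsmul_eq_mul, smul_eq_mul]

/-- Over an integral domain, the Newton polytope of a product of nonzero
polynomials is the Minkowski sum of their Newton polytopes. -/
theorem newtonPolytope_mul (n : ℕ) (R : Type*) [CommRing R] [IsDomain R]
    (f g : MvPolynomial (Fin n) R) (hf : f ≠ 0) (hg : g ≠ 0) :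
    newtonPolytope (f * g) = newtonPolytope f + newtonPolytope g := by
  classical
  unfold newtonPolytope
  rw [← convexHull_add]
  apply Set.Subset.antisymm
  · refine convexHull_mono ?_
    rintro _ ⟨d, hd, rfl⟩
    obtain ⟨a, ha, b, hb, rfl⟩ := Finset.mem_add.mp (MvPolynomial.support_mul f g hd)
    exact ⟨_, ⟨a, ha, rfl⟩, _, ⟨b, hb, rfl⟩, by ext i; simp⟩
  · refine convexHull_min ?_ (convex_convexHull ℝ _)
    rintro _ ⟨_, ⟨a, ha, rfl⟩, _, ⟨b, hb, rfl⟩, rfl⟩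
    by_contra hx
    obtain ⟨L, u, hL, hu⟩ := geometric_hahn_banach_closed_point (convex_convexHull ℝ _)
      ((((f * g).support.finite_toSet).image _).isClosed_convexHull ℝ) hx
    obtain ⟨d, hd, hmax⟩ :=
      exists_mem_support_mul_weight_eq (fun i => L (Pi.single i 1)) f g hf hg
    have hdu := hL _ (subset_convexHull ℝ _ ⟨d, hd, rfl⟩)
    have hab := hmax a ha b hb
    simp only [map_add, dual_apply_exponent] at hu hdu
    linarith
end

section
/- Let X be a set and let F : (X → EReal) → EReal be a functional such that (i) F(⨆_{i∈I} φᵢ) = ⨆_{i∈I} F(φᵢ) for every (possibly empty) family (φᵢ)_{i∈I} of functions X → EReal (in particular F of the constant −∞ function is −∞), and (ii) F(c + φ) = c + F(φ) for every c ∈ EReal and φ : X → EReal, where addition is extended-real addition. Define the kernel k : X → EReal by k(x) = F(δₓ), where δₓ(y) = 0 if y = x and δₓ(y) = −∞ otherwise. Then F has the integral representation F(φ) = ⨆_{x∈X} ( φ(x) + k(x) ) for every φ : X → EReal. -/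
universe u

/-- Idempotent kernel theorem over the completed max-plus semiring `EReal`:
a functional `F` on functions `X → EReal` that commutes with arbitrary
(possibly empty) suprema (max-plus sums) and with the addition of
extended-real constants (max-plus scalar multiplication) is an integral
operator with kernel `k(x) = F(δₓ)`: `F(φ) = ⨆ x, (φ(x) + k(x))`. -/
theorem maxplus_kernel_theorem
    (X : Type u) [DecidableEq X] (F : (X → EReal) → EReal)
    (hsup : ∀ (ι : Type u) (φ : ι → X → EReal),
      F (fun x => ⨆ i, φ i x) = ⨆ i, F (φ i))
    (hsmul : ∀ (c : EReal) (φ : X → EReal),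
      F (fun x => c + φ x) = c + F φ) :
    ∀ φ : X → EReal,
      F φ = ⨆ x : X, (φ x + F (fun y => if y = x then (0 : EReal) else ⊥)) := by
  intro φ
  -- Every function is the supremum over `x` of the translates `φ x + δₓ`. This holds for infinite
  -- values `φ x` too, because `⊤ + ⊥ = ⊥` in `EReal`.
  have hφ : φ = fun y => ⨆ x, (φ x + if y = x then (0 : EReal) else ⊥) := by
    funext y
    apply le_antisymm
    · exact le_iSup_of_le y (by simp)
    · refine iSup_le fun x => ?_
      split_ifs with h
      · simp [h]
      · simp
  calc F φ = F (fun y => ⨆ x, (φ x + if y = x then (0 : EReal) else ⊥)) := congrArg F hφ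
    _ = ⨆ x, F (fun y => φ x + if y = x then (0 : EReal) else ⊥) := hsup X _
    _ = _ := iSup_congr fun x => hsmul (φ x) _
end
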